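/- If T is typable, Tσ ∈ 𝒟, and T → T', then ⟦T⟧σ = ⟦T'⟧σ (the interpretation of types is invariant by reduction of the type). -/

import Mathlib

set_option maxHeartbeats 1000000

/-! # Terms of λΠ/R (de Bruijn representation) -/

inductive Trm (F : Type) : Type
  | type : Trm F
  | kind : Trm F
  | var : ℕ → Trm F
  | sym : F → Trm F
  | pi : Trm F → Trm F → Trm F
  | app : Trm F → Trm F → Trm F
  | lam : Trm F → Trm F → Trm F

namespace Trm

variable {F : Type}

/-- Lifting of a renaming under a binder. -/
def upRen (ρ : ℕ → ℕ) : ℕ → ℕ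
  | 0 => 0
  | n + 1 => ρ n + 1

/-- Renaming of (de Bruijn) variables. -/
def rename (ρ : ℕ → ℕ) : Trm F → Trm F
  | .type => .type
  | .kind => .kind
  | .var n => .var (ρ n)
  | .sym f => .sym f
  | .pi A B => .pi (rename ρ A) (rename (upRen ρ) B)
  | .app t u => .app (rename ρ t) (rename ρ u)
  | .lam A b => .lam (rename ρ A) (rename (upRen ρ) b)

/-- Lifting of a substitution under a binder. -/
def up (σ : ℕ → Trm F) : ℕ → Trm F
  | 0 => .var 0
  | n + 1 => rename Nat.succ (σ n)

/-- Capture-avoiding (parallel) substitution. -/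
def subst (σ : ℕ → Trm F) : Trm F → Trm F
  | .type => .type
  | .kind => .kind
  | .var n => σ n
  | .sym f => .sym f
  | .pi A B => .pi (subst σ A) (subst (up σ) B)
  | .app t u => .app (subst σ t) (subst σ u)
  | .lam A b => .lam (subst σ A) (subst (up σ) b)

/-- Cons of a term on a substitution: `scons a σ` maps `0` to `a` and `n+1` to `σ n`. -/
def scons (a : Trm F) (σ : ℕ → Trm F) : ℕ → Trm F
  | 0 => a
  | n + 1 => σ n

/-- Substitution of the first free variable: `t[x ↦ a]`. -/
def subst1 (a t : Trm F) : Trm F := subst (scons a .var) t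

/-- Shifting of all free variables. -/
def shift : Trm F → Trm F := rename Nat.succ

/-- Application of a head term to a list of arguments: `appList h [t1,…,tn] = h t1 … tn`. -/
def appList (h : Trm F) : List (Trm F) → Trm F
  | [] => h
  | a :: as => appList (.app h a) as

/-- Free (de Bruijn) variables of a term. -/
def FV : Trm F → Set ℕ
  | .type => ∅
  | .kind => ∅
  | .var n => {n}
  | .sym _ => ∅
  | .pi A B => FV A ∪ {n | n + 1 ∈ FV B}
  | .app t u => FV t ∪ FV u
  | .lam A b => FV A ∪ {n | n + 1 ∈ FV b}

/-- The class 𝕂 of kinds: `K = TYPE | Πx:t.K`. -/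
def IsKind : Trm F → Prop
  | .type => True
  | .pi _ B => IsKind B
  | _ => False

/-- Sorts: `TYPE` and `KIND`. -/
def IsSort (s : Trm F) : Prop := s = .type ∨ s = .kind

/-- The product arity of a term: the number of leading products. -/
def piArity : Trm F → ℕ
  | .pi _ B => piArity B + 1
  | _ => 0

/-- Strip `n` leading products. -/
def piCodN : ℕ → Trm F → Trm F
  | 0, T => T
  | n + 1, .pi _ B => piCodN n B
  | _ + 1, T => T

/-- The first `n` domains of the leading products, as a de Bruijn context
(type of variable `0` first, i.e. innermost first). -/
def teleN : ℕ → Trm F → List (Trm F)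
  | 0, _ => []
  | n + 1, .pi A B => teleN n B ++ [A]
  | _ + 1, _ => []

/-- The full telescope of leading products, as a de Bruijn context. -/
def telescope (T : Trm F) : List (Trm F) := teleN (piArity T) T

/-- The domains of the leading products, outermost first. -/
def piDoms : Trm F → List (Trm F)
  | .pi A B => A :: piDoms B
  | _ => []

end Trm

/-- The subterm relation (reflexive and transitive). -/
inductive Subterm {F : Type} : Trm F → Trm F → Prop
  | refl (t : Trm F) : Subterm t t
  | piL {t A B} : Subterm t A → Subterm t (.pi A B)
  | piR {t A B} : Subterm t B → Subterm t (.pi A B)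
  | appL {t u v} : Subterm t u → Subterm t (.app u v)
  | appR {t u v} : Subterm t v → Subterm t (.app u v)
  | lamL {t A b} : Subterm t A → Subterm t (.lam A b)
  | lamR {t A b} : Subterm t b → Subterm t (.lam A b)

/-! # Rewriting -/

/-- A set of rewriting rules `l → r`. -/
abbrev Rules (F : Type) := Set (Trm F × Trm F)

/-- `R` is a rewriting system: for every rule `l → r`, `FV(r) ⊆ FV(l)` and
`l` is of the form `f l⃗`. -/
def IsRewriteSystem {F : Type} (R : Rules F) : Prop :=
  ∀ p ∈ R, Trm.FV p.2 ⊆ Trm.FV p.1 ∧ ∃ (f : F) (ls : List (Trm F)), p.1 = Trm.appList (.sym f) ls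

/-- A symbol is defined if it heads the left-hand side of some rule. -/
def Defined {F : Type} (R : Rules F) (f : F) : Prop :=
  ∃ (ls : List (Trm F)) (r : Trm F), (Trm.appList (.sym f) ls, r) ∈ R

/-- One-step reduction `→ = →β ∪ →R`: β-reduction together with the closure of the
rules of `R` by substitution and context. -/
inductive Red {F : Type} (R : Rules F) : Trm F → Trm F → Prop
  | beta (A b a : Trm F) : Red R (.app (.lam A b) a) (Trm.subst1 a b)
  | rule {l r : Trm F} (σ : ℕ → Trm F) : (l, r) ∈ R → Red R (Trm.subst σ l) (Trm.subst σ r)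
  | appL {t t' u} : Red R t t' → Red R (.app t u) (.app t' u)
  | appR {t u u'} : Red R u u' → Red R (.app t u) (.app t u')
  | piL {A A' B} : Red R A A' → Red R (.pi A B) (.pi A' B)
  | piR {A B B'} : Red R B B' → Red R (.pi A B) (.pi A B')
  | lamL {A A' b} : Red R A A' → Red R (.lam A b) (.lam A' b)
  | lamR {A b b'} : Red R b b' → Red R (.lam A b) (.lam A b')

/-- Multi-step reduction `→*`. -/
def RedStar {F : Type} (R : Rules F) : Trm F → Trm F → Prop := Relation.ReflTransGen (Red R)

/-- Joinability `↓`. -/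
def Joinable {F : Type} (R : Rules F) (t u : Trm F) : Prop :=
  ∃ v, RedStar R t v ∧ RedStar R u v

/-- Local confluence: `← · → ⊆ →* · *←`. -/
def LocallyConfluent {F : Type} (R : Rules F) : Prop :=
  ∀ t u v, Red R t u → Red R t v → Joinable R u v

/-- `t` is strongly normalizing (terminating): no infinite reduction sequence from `t`. -/
def SN {F : Type} (R : Rules F) (t : Trm F) : Prop := Acc (fun a b => Red R b a) t

/-- The set of strongly normalizing terms. -/
def SNset {F : Type} (R : Rules F) : Set (Trm F) := {t | SN R t}

/-- `t` is in normal form. -/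
def NormalForm {F : Type} (R : Rules F) (t : Trm F) : Prop := ∀ u, ¬ Red R t u

/-- Neutral terms: `(λx:A.t)u v⃗`, `x v⃗`, or `f v⃗` where every rule `f l⃗ → r ∈ R`
satisfies `|l⃗| ≤ |v⃗|`. -/
def Neutral {F : Type} (R : Rules F) (t : Trm F) : Prop :=
  (∃ (A b a : Trm F) (vs : List (Trm F)), t = Trm.appList (.app (.lam A b) a) vs) ∨
  (∃ (x : ℕ) (vs : List (Trm F)), t = Trm.appList (.var x) vs) ∨
  (∃ (f : F) (vs : List (Trm F)), t = Trm.appList (.sym f) vs ∧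
    ∀ (ls : List (Trm F)) (r : Trm F), (Trm.appList (.sym f) ls, r) ∈ R → ls.length ≤ vs.length)

/-- Computability predicates: `S ⊆ SN`, `S` is closed under reduction, and `S` contains
every neutral term all of whose one-step reducts are in `S`. -/
def IsCompPred {F : Type} (R : Rules F) (S : Set (Trm F)) : Prop :=
  S ⊆ SNset R ∧ (∀ t ∈ S, ∀ u, Red R t u → u ∈ S) ∧
  (∀ t, Neutral R t → (∀ u, Red R t u → u ∈ S) → t ∈ S)

/-! # Typing: λP extended with function symbols and conversion modulo `→` -/

/-- The typing rules of λΠ/R: the rules of λP (in de Bruijn presentation) with the extra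
rule (fun) `⊢ f : Θ_f` and conversion up to joinability for `→`. -/
inductive Typing {F : Type} (R : Rules F) (Θ sΘ : F → Trm F) :
    List (Trm F) → Trm F → Trm F → Prop
  | ax : Typing R Θ sΘ [] .type .kind
  | var {Γ A s} : Trm.IsSort s → Typing R Θ sΘ Γ A s →
      Typing R Θ sΘ (A :: Γ) (.var 0) (Trm.shift A)
  | weak {Γ A s b B} : Trm.IsSort s → Typing R Θ sΘ Γ A s → Typing R Θ sΘ Γ b B →
      Typing R Θ sΘ (A :: Γ) (Trm.shift b) (Trm.shift B)
  | prod {Γ A B s} : Trm.IsSort s → Typing R Θ sΘ Γ A .type → Typing R Θ sΘ (A :: Γ) B s →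
      Typing R Θ sΘ Γ (.pi A B) s
  | abs {Γ A b B s} : Trm.IsSort s → Typing R Θ sΘ (A :: Γ) b B →
      Typing R Θ sΘ Γ (.pi A B) s → Typing R Θ sΘ Γ (.lam A b) (.pi A B)
  | app {Γ t a A B} : Typing R Θ sΘ Γ t (.pi A B) → Typing R Θ sΘ Γ a A →
      Typing R Θ sΘ Γ (.app t a) (Trm.subst1 a B)
  | conv {Γ a A B s} : Typing R Θ sΘ Γ a A → Joinable R A B → Typing R Θ sΘ Γ B s →
      Trm.IsSort s → Typing R Θ sΘ Γ a B
  | symb (f : F) : Trm.IsSort (sΘ f) → Typing R Θ sΘ [] (Θ f) (sΘ f) →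
      Typing R Θ sΘ [] (.sym f) (Θ f)

/-- `→` preserves typing (subject reduction). -/
def PresTyping {F : Type} (R : Rules F) (Θ sΘ : F → Trm F) : Prop :=
  ∀ Γ t u T, Typing R Θ sΘ Γ t T → Red R t u → Typing R Θ sΘ Γ u T

/-- A substitution `γ` is well-typed from `Δ` to `Γ` (for a generic typing judgment `Ty`):
for all `(x : T) ∈ Δ`, `Ty Γ (xγ) (Tγ)`. -/
def SubstTyped {F : Type} (Ty : List (Trm F) → Trm F → Trm F → Prop)
    (Γ : List (Trm F)) (γ : ℕ → Trm F) (Δ : List (Trm F)) : Prop :=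
  ∀ i A, Δ[i]? = some A → Ty Γ (γ i) (Trm.subst (fun j => γ (j + i + 1)) A)

/-! # Interpretation of types as computability predicates -/

/-- `𝕀`: partial functions from terms to sets of terms. -/
abbrev Interp (F : Type) := Trm F → Part (Set (Trm F))

/-- Graph inclusion of partial functions. -/
def InterpLE {F : Type} (I J : Interp F) : Prop := ∀ T S, S ∈ I T → S ∈ J T

/-- `I` is the least fixpoint of `φ` on `𝕀` (ordered by graph inclusion). -/
def IsLfpInterp {F : Type} (φ : Interp F → Interp F) (I : Interp F) : Prop :=
  φ I = I ∧ ∀ J, φ J = J → InterpLE I J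

/-- The domain `D(I)`: terminating terms `T` such that whenever `T →* Πx:A.B`,
`A ∈ dom(I)` and `B[x↦a] ∈ dom(I)` for all `a ∈ I(A)`. -/
def domD {F : Type} (R : Rules F) (I : Interp F) : Set (Trm F) :=
  {T | SN R T ∧ ∀ A B, RedStar R T (.pi A B) →
    (I A).Dom ∧ ∀ S ∈ I A, ∀ a ∈ S, (I (Trm.subst1 a B)).Dom}

/-- `{t | ∀ a ∈ I(A), t a ∈ I(B[x↦a])}` (relational reading of the partial function `I`). -/
def piPart {F : Type} (I : Interp F) (A B : Trm F) : Set (Trm F) :=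
  {t | ∀ S ∈ I A, ∀ a ∈ S, ∀ S' ∈ I (Trm.subst1 a B), Trm.app t a ∈ S'}

open Classical in
/-- The monotone function `F : 𝕀 → 𝕀`: `dom(F(I)) = D(I)`; `F(I)(T) = SN` if the normal
form of `T` is not a product; `F(I)(T) = {t | ∀ a ∈ I(A), t a ∈ I(B[x↦a])}` if the normal
form of `T` is `Πx:A.B`. -/
noncomputable def interpF {F : Type} (R : Rules F) (I : Interp F) : Interp F := fun T =>
  ⟨T ∈ domD R I, fun _ =>
    if h : ∃ A B, RedStar R T (.pi A B) ∧ NormalForm R (.pi A B) then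
      piPart I h.choose h.choose_spec.choose
    else SNset R⟩

/-- The value of a partial interpretation at `T` (as a set). -/
def partMem {F : Type} (I : Interp F) (T : Trm F) : Set (Trm F) := {t | ∀ S ∈ I T, t ∈ S}

open Classical in
/-- The interpretation `⟦T⟧σ` of a term `T` wrt a substitution `σ`, relative to the least
fixpoint `I = ℐ` of `interpF`: `⟦s⟧σ = 𝒟` for `s` a sort;
`⟦Πx:A.K⟧σ = {t | ∀ a ∈ ⟦A⟧σ, t a ∈ ⟦K⟧[x↦a,σ]}` for `K` a kind;
`⟦T⟧σ = ℐ(Tσ)` if `T` is neither a kind nor `KIND` and `Tσ ∈ 𝒟`; `⟦T⟧σ = SN` otherwise. -/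
noncomputable def interp {F : Type} (R : Rules F) (I : Interp F) :
    Trm F → (ℕ → Trm F) → Set (Trm F)
  | .type, _ => domD R I
  | .kind, _ => domD R I
  | .pi A B, σ =>
      if Trm.IsKind B then
        {t | ∀ a ∈ interp R I A σ, Trm.app t a ∈ interp R I B (Trm.scons a σ)}
      else if Trm.subst σ (.pi A B) ∈ domD R I then partMem I (Trm.subst σ (.pi A B))
      else SNset R
  | .var n, σ =>
      if Trm.subst σ (.var n) ∈ domD R I then partMem I (Trm.subst σ (.var n)) else SNset R
  | .sym g, σ =>
      if Trm.subst σ (.sym g) ∈ domD R I then partMem I (Trm.subst σ (.sym g)) else SNset R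
  | .app t u, σ =>
      if Trm.subst σ (.app t u) ∈ domD R I then partMem I (Trm.subst σ (.app t u)) else SNset R
  | .lam A b, σ =>
      if Trm.subst σ (.lam A b) ∈ domD R I then partMem I (Trm.subst σ (.lam A b)) else SNset R

/-- `σ ⊨ Γ`: a substitution is adequate wrt an environment. -/
def Models {F : Type} (R : Rules F) (I : Interp F) (σ : ℕ → Trm F) (Γ : List (Trm F)) : Prop :=
  ∀ i A, Γ[i]? = some A → σ i ∈ interp R I A (fun j => σ (j + i + 1))

/-- The typing map `Θ` is adequate: `f ∈ ⟦Θ_f⟧` whenever `⊢ Θ_f : s_f` and `Θ_f ∈ ⟦s_f⟧`. -/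
def Adequate {F : Type} (R : Rules F) (Θ sΘ : F → Trm F) (I : Interp F) : Prop :=
  ∀ f : F, Typing R Θ sΘ [] (Θ f) (sΘ f) → Θ f ∈ interp R I (sΘ f) Trm.var →
    Trm.sym f ∈ interp R I (Θ f) Trm.var

/-- The substitution `[x⃗ ↦ l⃗]` (where `ls` lists the images of variables `0, 1, …`). -/
def mkSubst {F : Type} (ls : List (Trm F)) : ℕ → Trm F := fun i =>
  (ls[i]?).getD (.var (i - ls.length))

/-- Composition of substitutions: `x ↦ (xγ)σ`. -/
def compSubst {F : Type} (γ σ : ℕ → Trm F) : ℕ → Trm F := fun i => Trm.subst σ (γ i)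

/-- The set `ℂ` of terms `f t⃗` with `|t⃗| = arit(Θ_f)`, `⊢ Θ_f : s_f`, `Θ_f ∈ ⟦s_f⟧` and
`[x⃗↦t⃗] ⊨ Γ_f`. -/
def CC {F : Type} (R : Rules F) (Θ sΘ : F → Trm F) (I : Interp F) : Set (Trm F) :=
  {t | ∃ (f : F) (ts : List (Trm F)), t = Trm.appList (.sym f) ts ∧
    ts.length = Trm.piArity (Θ f) ∧
    Typing R Θ sΘ [] (Θ f) (sΘ f) ∧ Θ f ∈ interp R I (sΘ f) Trm.var ∧
    Models R I (mkSubst ts.reverse) (Trm.telescope (Θ f))}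

/-! # Dependency pairs -/

/-- Occurrences of `p` in a term, not at the root, such that `p` is not further applied
(i.e. `p` collects all the arguments of its head at this occurrence). -/
inductive MaxOccNR {F : Type} (p : Trm F) : Trm F → Prop
  | appL {u v} : MaxOccNR p u → MaxOccNR p (.app u v)
  | appR {u v} : MaxOccNR p v → MaxOccNR p (.app u v)
  | appRroot {u} : MaxOccNR p (.app u p)
  | piL {A B} : MaxOccNR p A → MaxOccNR p (.pi A B)
  | piLroot {B} : MaxOccNR p (.pi p B)
  | piR {A B} : MaxOccNR p B → MaxOccNR p (.pi A B)
  | piRroot {A} : MaxOccNR p (.pi A p)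
  | lamL {A b} : MaxOccNR p A → MaxOccNR p (.lam A b)
  | lamLroot {b} : MaxOccNR p (.lam p b)
  | lamR {A b} : MaxOccNR p b → MaxOccNR p (.lam A b)
  | lamRroot {A} : MaxOccNR p (.lam A p)

/-- `p` occurs in `t` as a maximal application. -/
def MaxOcc {F : Type} (p t : Trm F) : Prop := t = p ∨ MaxOccNR p t

/-- Dependency pairs: `f l⃗ > g m⃗` iff there is a rule `f l⃗ → r ∈ R`, `g` is defined and
`g m⃗` is a subterm of `r` such that `m⃗` are all the arguments to which `g` is applied. -/
def DepPair {F : Type} (R : Rules F) (f : F) (ls : List (Trm F)) (g : F)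
    (ms : List (Trm F)) : Prop :=
  Defined R g ∧ ∃ r, (Trm.appList (.sym f) ls, r) ∈ R ∧ MaxOcc (Trm.appList (.sym g) ms) r

/-- `f t⃗ →arg f u⃗`: reduction of exactly one argument. -/
def ArgRed {F : Type} (R : Rules F) (t u : Trm F) : Prop :=
  ∃ (f : F) (pre post : List (Trm F)) (a b : Trm F), Red R a b ∧
    t = Trm.appList (.sym f) (pre ++ a :: post) ∧ u = Trm.appList (.sym f) (pre ++ b :: post)

/-- `>ₛ`: the closure of the dependency pair relation by substitution and left-application:
`f t₁…t_p >ₛ g u₁…u_q` iff there are a dependency pair `f l₁…l_i > g m₁…m_j` with `i ≤ p`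
and `j ≤ q` and a substitution `σ` such that `t_k →* l_kσ` for `k ≤ i` and `m_kσ = u_k`
for `k ≤ j`. -/
def GTsub {F : Type} (R : Rules F) (t u : Trm F) : Prop :=
  ∃ (f g : F) (ts us ls ms : List (Trm F)) (σ : ℕ → Trm F),
    t = Trm.appList (.sym f) ts ∧ u = Trm.appList (.sym g) us ∧
    DepPair R f ls g ms ∧ ls.length ≤ ts.length ∧ ms.length ≤ us.length ∧
    (∀ (k : ℕ) (tk lk : Trm F), ts[k]? = some tk → ls[k]? = some lk → RedStar R tk (Trm.subst σ lk)) ∧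
    (∀ (k : ℕ) (mk : Trm F), ms[k]? = some mk → us[k]? = some (Trm.subst σ mk))

/-- The call relation `≻̃ = →arg* · >ₛ` on `ℂ`. -/
def CallRel {F : Type} (R : Rules F) (Θ sΘ : F → Trm F) (I : Interp F) (t u : Trm F) : Prop :=
  t ∈ CC R Θ sΘ I ∧ u ∈ CC R Θ sΘ I ∧
    ∃ v, Relation.ReflTransGen (ArgRed R) t v ∧ GTsub R v u

/-! # Precedence and well-structured systems -/

/-- `f ⪰ g` (one step): `g` occurs in `Θ_f` or in the right-hand side of a rule of `f`. -/
def PrecBase {F : Type} (R : Rules F) (Θ : F → Trm F) (f g : F) : Prop :=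
  Subterm (.sym g) (Θ f) ∨
  ∃ (ls : List (Trm F)) (r : Trm F), (Trm.appList (.sym f) ls, r) ∈ R ∧ Subterm (.sym g) r

/-- `⪰`: the smallest quasi-order containing `PrecBase`. -/
def Preceq {F : Type} (R : Rules F) (Θ : F → Trm F) : F → F → Prop :=
  Relation.ReflTransGen (PrecBase R Θ)

/-- `≻`: the strict part of `⪰`. -/
def Prec {F : Type} (R : Rules F) (Θ : F → Trm F) (f g : F) : Prop :=
  Preceq R Θ f g ∧ ¬ Preceq R Θ g f

/-- The restricted type system `⊢_{≺ f}`: as `Typing`, but function symbols may only be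
introduced when strictly smaller than `f` in the precedence. -/
inductive LTyp {F : Type} (R : Rules F) (Θ sΘ : F → Trm F) (f : F) :
    List (Trm F) → Trm F → Trm F → Prop
  | ax : LTyp R Θ sΘ f [] .type .kind
  | var {Γ A s} : Trm.IsSort s → LTyp R Θ sΘ f Γ A s →
      LTyp R Θ sΘ f (A :: Γ) (.var 0) (Trm.shift A)
  | weak {Γ A s b B} : Trm.IsSort s → LTyp R Θ sΘ f Γ A s → LTyp R Θ sΘ f Γ b B →
      LTyp R Θ sΘ f (A :: Γ) (Trm.shift b) (Trm.shift B)
  | prod {Γ A B s} : Trm.IsSort s → LTyp R Θ sΘ f Γ A .type → LTyp R Θ sΘ f (A :: Γ) B s →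
      LTyp R Θ sΘ f Γ (.pi A B) s
  | abs {Γ A b B s} : Trm.IsSort s → LTyp R Θ sΘ f (A :: Γ) b B →
      LTyp R Θ sΘ f Γ (.pi A B) s → LTyp R Θ sΘ f Γ (.lam A b) (.pi A B)
  | app {Γ t a A B} : LTyp R Θ sΘ f Γ t (.pi A B) → LTyp R Θ sΘ f Γ a A →
      LTyp R Θ sΘ f Γ (.app t a) (Trm.subst1 a B)
  | conv {Γ a A B s} : LTyp R Θ sΘ f Γ a A → Joinable R A B → LTyp R Θ sΘ f Γ B s →
      Trm.IsSort s → LTyp R Θ sΘ f Γ a B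
  | symb (g : F) : Prec R Θ f g → Trm.IsSort (sΘ g) → LTyp R Θ sΘ f [] (Θ g) (sΘ g) →
      LTyp R Θ sΘ f [] (.sym g) (Θ g)

/-- The arguments `y⃗γ = [y₁γ, …, y_jγ]` of an instantiated dependency pair right-hand
side, where `y_j` is de Bruijn variable `0`. -/
def dpArgs {F : Type} (γ : ℕ → Trm F) (j : ℕ) : List (Trm F) :=
  (List.range j).reverse.map γ

/-- The restricted type system `⊢_{f l⃗}` (computability closure): as `Typing`, except that
types are required to be typable using symbols smaller than `f` only, and function symbols
are introduced either as undefined constants or through instances of dependency pairs of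
`f l⃗`. -/
inductive RTyp {F : Type} (R : Rules F) (Θ sΘ : F → Trm F) (f : F) (ls : List (Trm F)) :
    List (Trm F) → Trm F → Trm F → Prop
  | ax : RTyp R Θ sΘ f ls [] .type .kind
  | var {Γ A s} : Trm.IsSort s → LTyp R Θ sΘ f Γ A s →
      RTyp R Θ sΘ f ls (A :: Γ) (.var 0) (Trm.shift A)
  | weak {Γ A s b B} : Trm.IsSort s → LTyp R Θ sΘ f Γ A s → RTyp R Θ sΘ f ls Γ b B →
      RTyp R Θ sΘ f ls (A :: Γ) (Trm.shift b) (Trm.shift B)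
  | prod {Γ A B s} : Trm.IsSort s → RTyp R Θ sΘ f ls Γ A .type →
      RTyp R Θ sΘ f ls (A :: Γ) B s → RTyp R Θ sΘ f ls Γ (.pi A B) s
  | abs {Γ A b B s} : Trm.IsSort s → RTyp R Θ sΘ f ls (A :: Γ) b B →
      LTyp R Θ sΘ f Γ (.pi A B) s → RTyp R Θ sΘ f ls Γ (.lam A b) (.pi A B)
  | app {Γ t a A B s} : Trm.IsSort s → RTyp R Θ sΘ f ls Γ t (.pi A B) →
      RTyp R Θ sΘ f ls Γ a A → LTyp R Θ sΘ f Γ (.pi A B) s →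
      RTyp R Θ sΘ f ls Γ (.app t a) (Trm.subst1 a B)
  | conv {Γ a A B s s'} : Trm.IsSort s → Trm.IsSort s' → RTyp R Θ sΘ f ls Γ a A →
      Joinable R A B → LTyp R Θ sΘ f Γ B s → LTyp R Θ sΘ f Γ A s' →
      RTyp R Θ sΘ f ls Γ a B
  | dp {Γ : List (Trm F)} (g : F) (γ : ℕ → Trm F) (j : ℕ) :
      j ≤ Trm.piArity (Θ g) → Trm.IsSort (sΘ g) → LTyp R Θ sΘ f [] (Θ g) (sΘ g) →
      (∀ i A, (Trm.teleN j (Θ g))[i]? = some A →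
        RTyp R Θ sΘ f ls Γ (γ i) (Trm.subst (fun k => γ (k + i + 1)) A)) →
      DepPair R f ls g (dpArgs γ j) →
      RTyp R Θ sΘ f ls Γ (Trm.appList (.sym g) (dpArgs γ j)) (Trm.subst γ (Trm.piCodN j (Θ g)))
  | const (g : F) : ¬ Defined R g → Trm.IsSort (sΘ g) → LTyp R Θ sΘ f [] (Θ g) (sΘ g) →
      RTyp R Θ sΘ f ls [] (.sym g) (Θ g)

/-- `R` is well-structured (wrt the assignment `Δ` of an environment to every rule):
(a) `≻` is well-founded; (b) `|l⃗| ≤ arit(Θ_f)` for every rule `f l⃗ → r`;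
(c) `|m⃗| ≤ arit(Θ_g)` for every dependency pair `f l⃗ > g m⃗`;
(d) `Δ_{f l⃗→r} ⊢_{f l⃗} r : U[x⃗↦l⃗]` for every rule `f l⃗ → r`, where `Θ_f = Πx⃗:T⃗.U`. -/
def WellStructured {F : Type} (R : Rules F) (Θ sΘ : F → Trm F)
    (Δ : Trm F → Trm F → List (Trm F)) : Prop :=
  WellFounded (fun g f => Prec R Θ f g) ∧
  (∀ l r, (l, r) ∈ R → ∀ (f : F) ls, l = Trm.appList (.sym f) ls →
    ls.length ≤ Trm.piArity (Θ f)) ∧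
  (∀ (f : F) ls (g : F) ms, DepPair R f ls g ms → ms.length ≤ Trm.piArity (Θ g)) ∧
  (∀ l r, (l, r) ∈ R → ∀ (f : F) ls, l = Trm.appList (.sym f) ls →
    RTyp R Θ sΘ f ls (Δ l r) r (Trm.subst (mkSubst ls.reverse) (Trm.piCodN ls.length (Θ f))))

/-- `R` is accessible: for every rule `f l⃗ → r` with `Θ_f = Πx⃗:T⃗.U`, `|x⃗| = |l⃗|`, and
every substitution `σ`, `σ ⊨ Δ_{f l⃗→r}` whenever `⊢ Θ_f : s_f`, `Θ_f ∈ ⟦s_f⟧` and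
`[x⃗↦l⃗]σ ⊨ x⃗:T⃗`. -/
def Accessible {F : Type} (R : Rules F) (Θ sΘ : F → Trm F) (I : Interp F)
    (Δ : Trm F → Trm F → List (Trm F)) : Prop :=
  ∀ l r, (l, r) ∈ R → ∀ (f : F) ls, l = Trm.appList (.sym f) ls → ∀ σ : ℕ → Trm F,
    Typing R Θ sΘ [] (Θ f) (sΘ f) → Θ f ∈ interp R I (sΘ f) Trm.var →
    Models R I (compSubst (mkSubst ls.reverse) σ) (Trm.teleN ls.length (Θ f)) →
    Models R I σ (Δ l r)

/-- A term in `𝕂 ∪ {KIND}`. -/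
def IsKindLike {F : Type} (t : Trm F) : Prop := Trm.IsKind t ∨ t = .kind

/-- `R` is plain function-passing (PFP): for every rule `f l⃗ → r` with `Θ_f = Πx⃗:T⃗.U` and
`|x⃗| = |l⃗|`, no `l_i` is a kind or `KIND`, and every `(y : T) ∈ Δ_{f l⃗→r}` satisfies:
either there is `i` with `y = l_i` and `T = T_i[x⃗↦l⃗]`, or `y ∈ FV(l_i)` and `T = D t⃗`
with `D` undefined and `|t⃗| = arit(Θ_D)`. -/
def PFP {F : Type} (R : Rules F) (Θ : F → Trm F) (Δ : Trm F → Trm F → List (Trm F)) : Prop :=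
  ∀ l r, (l, r) ∈ R → ∀ (f : F) ls, l = Trm.appList (.sym f) ls →
    (∀ li ∈ ls, ¬ IsKindLike li) ∧
    (∀ i A, (Δ l r)[i]? = some A →
      (∃ (k : ℕ) (Tk : Trm F), ls[k]? = some (Trm.var i) ∧ (Trm.piDoms (Θ f))[k]? = some Tk ∧
        Trm.rename (fun j => j + i + 1) A = Trm.subst (mkSubst ((ls.take k).reverse)) Tk) ∨
      ((∃ (k : ℕ) (lk : Trm F), ls[k]? = some lk ∧ i ∈ Trm.FV lk) ∧
        ∃ (D : F) (ts : List (Trm F)), Trm.rename (fun j => j + i + 1) A =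
          Trm.appList (.sym D) ts ∧ ¬ Defined R D ∧ ts.length = Trm.piArity (Θ D)))

/-! # Size-change termination -/

/-- Entries of size-change matrices: `−1`, `0` or `∞`. -/
inductive SCTe : Type
  | minusOne : SCTe
  | zero : SCTe
  | infty : SCTe
deriving DecidableEq

/-- Min-plus multiplication of entries (addition, truncated at `−1`). -/
def SCTe.comp : SCTe → SCTe → SCTe
  | .infty, _ => .infty
  | _, .infty => .infty
  | .minusOne, _ => .minusOne
  | _, .minusOne => .minusOne
  | .zero, .zero => .zero

/-- Minimum of entries (`−1 < 0 < ∞`). -/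
def SCTe.min : SCTe → SCTe → SCTe
  | .minusOne, _ => .minusOne
  | _, .minusOne => .minusOne
  | .zero, _ => .zero
  | .infty, x => x

/-- Base of the relation `⊵`: `f t₁…t_n ⊵ t_i` for `f ∈ F`. -/
def ArgSubBase {F : Type} (t u : Trm F) : Prop :=
  ∃ (f : F) (ts : List (Trm F)), t = Trm.appList (.sym f) ts ∧ u ∈ ts

/-- `⊵`: the smallest transitive relation such that `f t₁…t_n ⊵ t_i` for `f ∈ F`. -/
def ArgGT {F : Type} : Trm F → Trm F → Prop := Relation.TransGen ArgSubBase

open Classical in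
/-- The size-change matrix of a dependency pair `f l₁…l_p > g m₁…m_q`:
`a_{ij} = −1` if `l_i ⊵ m_j`, `a_{ij} = 0` if `l_i = m_j`, `a_{ij} = ∞` otherwise
(in particular if `i > p` or `j > q`). -/
noncomputable def dpMatrix {F : Type} (ls ms : List (Trm F)) : ℕ → ℕ → SCTe := fun i j =>
  match ls[i]?, ms[j]? with
  | some li, some mj =>
      if ArgGT li mj then .minusOne else if li = mj then .zero else .infty
  | _, _ => .infty

/-- Min-plus product of matrices, the middle dimension being `d`. -/
def matComp (d : ℕ) (M N : ℕ → ℕ → SCTe) : ℕ → ℕ → SCTe := fun i j =>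
  ((List.range d).map fun k => (M i k).comp (N k j)).foldr SCTe.min .infty

/-- The transitive closure of the call graph of `R`: edges are labeled by the matrices of
the dependency pairs, multiplied in the min-plus semiring along paths. -/
inductive TCEdge {F : Type} (R : Rules F) (Θ : F → Trm F) : F → F → (ℕ → ℕ → SCTe) → Prop
  | base {f g : F} {ls ms : List (Trm F)} : DepPair R f ls g ms →
      TCEdge R Θ f g (dpMatrix ls ms)
  | comp {f g h : F} {M N : ℕ → ℕ → SCTe} : TCEdge R Θ f g M → TCEdge R Θ g h N →
      TCEdge R Θ f h (matComp (Trm.piArity (Θ g)) M N)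

/-- `R` is size-change terminating: in the transitive closure of the call graph, every
idempotent matrix labeling a loop has some `−1` on its diagonal. -/
def SCT {F : Type} (R : Rules F) (Θ : F → Trm F) : Prop :=
  ∀ (f : F) (M : ℕ → ℕ → SCTe), TCEdge R Θ f f M → matComp (Trm.piArity (Θ f)) M M = M →
    ∃ i < Trm.piArity (Θ f), M i i = SCTe.minusOne

/-! A typable `T` is a kind exactly when its type is `KIND`, so by subject reduction `T` and `T'`
are both kinds or both non-kinds. If neither is a kind, `⟦T⟧σ = ℐ(Tσ)`, and `ℐ(Tσ)` depends only on
the normal form of `Tσ`, which it shares with `T'σ` by Newman's lemma. If `T = Πx:A.K` is a kind,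
induct on `T`: the type of `A` is `TYPE`, so `A` and its reducts are not kinds and the first case
applies to `⟦A⟧σ = ℐ(Aσ)`; and `Tσ ∈ 𝒟` provides `K[x↦a,σ] ∈ 𝒟` for every `a ∈ ℐ(Aσ)`. -/

/-! # Renaming and substitution -/

namespace Trm

variable {F : Type}

theorem upRen_id : upRen id = id := by
  funext n; cases n <;> rfl

theorem upRen_comp (τ ρ : ℕ → ℕ) : upRen τ ∘ upRen ρ = upRen (τ ∘ ρ) := by
  funext n; cases n <;> rfl

theorem upRen_injective {ρ : ℕ → ℕ} (hρ : Function.Injective ρ) :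
    Function.Injective (upRen ρ) := by
  rintro (_ | m) (_ | n) h
  · rfl
  · cases h
  · cases h
  · exact congrArg Nat.succ (hρ (Nat.succ.inj h))

theorem rename_id (t : Trm F) : rename id t = t := by
  induction t <;> simp_all [rename, upRen_id]

theorem rename_rename (ρ τ : ℕ → ℕ) (t : Trm F) :
    rename τ (rename ρ t) = rename (τ ∘ ρ) t := by
  induction t generalizing ρ τ <;> simp_all [rename, upRen_comp]

theorem rename_leftInverse {ρ τ : ℕ → ℕ} (h : Function.LeftInverse τ ρ) :
    Function.LeftInverse (rename τ) (rename ρ : Trm F → Trm F) := fun t => by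
  rw [rename_rename, h.comp_eq_id, rename_id]

theorem up_var : up (.var : ℕ → Trm F) = .var := by
  funext n; cases n <;> rfl

theorem up_comp_upRen (σ : ℕ → Trm F) (ρ : ℕ → ℕ) : up σ ∘ upRen ρ = up (σ ∘ ρ) := by
  funext n; cases n <;> rfl

theorem rename_upRen_comp_up (ρ : ℕ → ℕ) (σ : ℕ → Trm F) :
    rename (upRen ρ) ∘ up σ = up (rename ρ ∘ σ) := by
  funext n
  cases n with
  | zero => rfl
  | succ n =>
    simp only [Function.comp_apply, up, rename_rename]
    rfl

theorem subst_var (t : Trm F) : subst .var t = t := by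
  induction t <;> simp_all [subst, up_var]

theorem subst_rename (ρ : ℕ → ℕ) (σ : ℕ → Trm F) (t : Trm F) :
    subst σ (rename ρ t) = subst (σ ∘ ρ) t := by
  induction t generalizing ρ σ <;> simp_all [rename, subst, up_comp_upRen]

theorem rename_subst (ρ : ℕ → ℕ) (σ : ℕ → Trm F) (t : Trm F) :
    rename ρ (subst σ t) = subst (rename ρ ∘ σ) t := by
  induction t generalizing ρ σ <;> simp_all [rename, subst, rename_upRen_comp_up]

theorem rename_eq_subst (ρ : ℕ → ℕ) (t : Trm F) : rename ρ t = subst (.var ∘ ρ) t := by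
  rw [← subst_rename, subst_var]

theorem compSubst_up (σ τ : ℕ → Trm F) : compSubst (up σ) (up τ) = up (compSubst σ τ) := by
  funext n
  cases n with
  | zero => rfl
  | succ n => exact (subst_rename _ _ _).trans (rename_subst _ _ _).symm

theorem subst_subst (σ τ : ℕ → Trm F) (t : Trm F) :
    subst τ (subst σ t) = subst (compSubst σ τ) t := by
  induction t generalizing σ τ <;> simp_all [subst, compSubst_up, compSubst]

theorem compSubst_up_scons_var (σ : ℕ → Trm F) (a : Trm F) :
    compSubst (up σ) (scons a .var) = scons a σ := by
  funext n
  cases n with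
  | zero => rfl
  | succ n => exact (subst_rename _ _ _).trans (subst_var _)

theorem subst1_subst_up (σ : ℕ → Trm F) (a t : Trm F) :
    subst1 a (subst (up σ) t) = subst (scons a σ) t := by
  rw [subst1, subst_subst, compSubst_up_scons_var]

theorem compSubst_scons_var (a : Trm F) (σ : ℕ → Trm F) :
    compSubst (scons a .var) σ = scons (subst σ a) σ := by
  funext n; cases n <;> rfl

theorem subst_subst1 (σ : ℕ → Trm F) (a t : Trm F) :
    subst σ (subst1 a t) = subst1 (subst σ a) (subst (up σ) t) := by
  rw [subst1_subst_up, subst1, subst_subst, compSubst_scons_var]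

theorem isKind_rename {ρ : ℕ → ℕ} {t : Trm F} : IsKind (rename ρ t) ↔ IsKind t := by
  induction t generalizing ρ <;> simp_all [rename, IsKind]

theorem rename_eq_kind {ρ : ℕ → ℕ} {t : Trm F} : rename ρ t = .kind ↔ t = .kind := by
  cases t <;> simp [rename]

theorem isKindLike_rename {ρ : ℕ → ℕ} {t : Trm F} : IsKindLike (rename ρ t) ↔ IsKindLike t :=
  or_congr isKind_rename rename_eq_kind

theorem appList_eq_self_or_app (h : Trm F) (ls : List (Trm F)) :
    appList h ls = h ∨ ∃ t u, appList h ls = .app t u := by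
  induction ls generalizing h with
  | nil => exact .inl rfl
  | cons a ls ih => exact .inr ((ih (.app h a)).elim (fun he => ⟨h, a, he⟩) id)

/-- `KIND` does not occur in the term. Unlike `t ≠ KIND`, this is inherited by subterms and stable
under substitution of terms with the same property. -/
def KindFree : Trm F → Prop
  | .kind => False
  | .pi A B => KindFree A ∧ KindFree B
  | .app t u => KindFree t ∧ KindFree u
  | .lam A b => KindFree A ∧ KindFree b
  | _ => True

theorem KindFree.rename {t : Trm F} (ht : t.KindFree) (ρ : ℕ → ℕ) : (t.rename ρ).KindFree := by
  induction t generalizing ρ <;> simp_all [Trm.rename, KindFree]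

theorem KindFree.up {σ : ℕ → Trm F} (hσ : ∀ n, (σ n).KindFree) (n : ℕ) : (up σ n).KindFree := by
  cases n with
  | zero => trivial
  | succ n => exact (hσ n).rename _

theorem KindFree.subst {t : Trm F} (ht : t.KindFree) {σ : ℕ → Trm F}
    (hσ : ∀ n, (σ n).KindFree) : (t.subst σ).KindFree := by
  induction t generalizing σ <;> simp_all [Trm.subst, KindFree, KindFree.up]

theorem KindFree.subst1 {a t : Trm F} (ht : t.KindFree) (ha : a.KindFree) :
    (Trm.subst1 a t).KindFree := by
  refine ht.subst fun n => ?_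
  cases n with
  | zero => exact ha
  | succ n => trivial

end Trm

/-! # Reduction -/

section Confluence

open Relation

theorem newman {α : Type*} {r : α → α → Prop}
    (hloc : ∀ a b c, r a b → r a c → Join (ReflTransGen r) b c) {a : α}
    (ha : Acc (Function.swap r) a) {b c : α} (hb : ReflTransGen r a b)
    (hc : ReflTransGen r a c) : Join (ReflTransGen r) b c := by
  induction ha generalizing b c with
  | intro a _ ih =>
    rcases hb.cases_head with rfl | ⟨b₁, hab₁, hb₁b⟩
    · exact ⟨c, hc, .refl⟩
    rcases hc.cases_head with rfl | ⟨c₁, hac₁, hc₁c⟩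
    · exact ⟨b, .refl, .head hab₁ hb₁b⟩
    obtain ⟨d, hb₁d, hc₁d⟩ := hloc a b₁ c₁ hab₁ hac₁
    obtain ⟨e, hbe, hde⟩ := ih b₁ hab₁ hb₁b hb₁d
    obtain ⟨f, hef, hcf⟩ := ih c₁ hac₁ (hc₁d.trans hde) hc₁c
    exact ⟨f, hbe.trans hef, hcf⟩

variable {F : Type} {R : Rules F}

theorem NormalForm.eq_of_redStar {t u : Trm F} (ht : NormalForm R t) (h : RedStar R t u) :
    u = t := by
  rcases ReflTransGen.cases_head h with rfl | ⟨v, hv, -⟩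
  · rfl
  · exact absurd hv (ht v)

theorem SN.joinable (hconf : LocallyConfluent R) {t u v : Trm F} (ht : SN R t)
    (hu : RedStar R t u) (hv : RedStar R t v) : Joinable R u v :=
  newman hconf ht hu hv

theorem SN.redStar_normalForm (hconf : LocallyConfluent R) {t u n : Trm F} (ht : SN R t)
    (hn : NormalForm R n) (htn : RedStar R t n) (htu : RedStar R t u) : RedStar R u n := by
  obtain ⟨v, huv, hnv⟩ := ht.joinable hconf htu htn
  rwa [← hn.eq_of_redStar hnv]

theorem SN.normalForm_unique (hconf : LocallyConfluent R) {t m n : Trm F} (ht : SN R t)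
    (hm : NormalForm R m) (hn : NormalForm R n) (htm : RedStar R t m) (htn : RedStar R t n) :
    m = n :=
  hn.eq_of_redStar (ht.redStar_normalForm hconf hm htm htn)

end Confluence

section Reduction

variable {F : Type} {R : Rules F}

theorem Red.subst {t t' : Trm F} (h : Red R t t') (σ : ℕ → Trm F) :
    Red R (t.subst σ) (t'.subst σ) := by
  induction h generalizing σ with
  | beta A b a => rw [Trm.subst_subst1]; exact .beta _ _ _
  | rule τ hlr => rw [Trm.subst_subst, Trm.subst_subst]; exact .rule _ hlr
  | appL _ ih => exact .appL (ih σ)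
  | appR _ ih => exact .appR (ih σ)
  | piL _ ih => exact .piL (ih σ)
  | piR _ ih => exact .piR (ih _)
  | lamL _ ih => exact .lamL (ih σ)
  | lamR _ ih => exact .lamR (ih _)

theorem Red.rename {t t' : Trm F} (h : Red R t t') (ρ : ℕ → ℕ) :
    Red R (t.rename ρ) (t'.rename ρ) := by
  simpa only [Trm.rename_eq_subst] using h.subst _

theorem RedStar.rename {t t' : Trm F} (h : RedStar R t t') (ρ : ℕ → ℕ) :
    RedStar R (t.rename ρ) (t'.rename ρ) :=
  Relation.ReflTransGen.lift (p := Red R) (Trm.rename ρ) (fun _ _ hs => Red.rename hs ρ) _ _ h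

/-- Every rule has the form `f l⃗ → r`. Contrary to `IsRewriteSystem`, the variables of `r` are not
constrained. -/
def SymHeaded (R : Rules F) : Prop :=
  ∀ p ∈ R, ∃ (f : F) (ls : List (Trm F)), p.1 = Trm.appList (.sym f) ls

theorem IsRewriteSystem.symHeaded (hR : IsRewriteSystem R) : SymHeaded R :=
  fun p hp => (hR p hp).2

theorem SymHeaded.subst_lhs_eq_sym_or_app (hR : SymHeaded R) {l r : Trm F} (hlr : (l, r) ∈ R)
    (σ : ℕ → Trm F) : (∃ f, l.subst σ = .sym f) ∨ ∃ t u, l.subst σ = .app t u := by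
  obtain ⟨f, ls, hl : l = _⟩ := hR _ hlr
  subst hl
  rcases Trm.appList_eq_self_or_app (.sym f) ls with he | ⟨t, u, he⟩
  · exact .inl ⟨f, by rw [he, Trm.subst]⟩
  · exact .inr ⟨t.subst σ, u.subst σ, by rw [he, Trm.subst]⟩

theorem Trm.IsSort.normalForm (hR : SymHeaded R) {s : Trm F} (hs : s.IsSort) :
    NormalForm R s := by
  intro u h
  cases h with
  | rule σ hlr =>
    rcases hR.subst_lhs_eq_sym_or_app hlr σ with ⟨_, he⟩ | ⟨_, _, he⟩ <;>
      simp [Trm.IsSort, he] at hs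
  | _ => simp [Trm.IsSort] at hs

theorem red_pi_iff (hR : SymHeaded R) {A B t : Trm F} :
    Red R (.pi A B) t ↔
      (∃ A', Red R A A' ∧ t = .pi A' B) ∨ ∃ B', Red R B B' ∧ t = .pi A B' := by
  constructor
  · intro h
    generalize hs : Trm.pi A B = s at h
    cases h with
    | rule σ hlr =>
      rcases hR.subst_lhs_eq_sym_or_app hlr σ with ⟨_, he⟩ | ⟨_, _, he⟩ <;> simp [← hs] at he
    | piL hA => cases hs; exact .inl ⟨_, hA, rfl⟩
    | piR hB => cases hs; exact .inr ⟨_, hB, rfl⟩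
    | _ => cases hs
  · rintro (⟨A', hA, rfl⟩ | ⟨B', hB, rfl⟩)
    · exact .piL hA
    · exact .piR hB

theorem Trm.IsKind.red (hR : SymHeaded R) {K K' : Trm F} (hK : K.IsKind) (h : Red R K K') :
    K'.IsKind := by
  induction K generalizing K' with
  | type => exact absurd h (Trm.IsSort.normalForm hR (.inl rfl) _)
  | pi A B _ ihB =>
    rcases (red_pi_iff hR).1 h with ⟨A', -, rfl⟩ | ⟨B', hB, rfl⟩
    · exact hK
    · exact (ihB hK hB : B'.IsKind)
  | _ => exact hK.elim

/-- No reduct of the term, including the term itself, is a kind or `KIND`. -/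
def NeverKindLike (R : Rules F) (t : Trm F) : Prop := ∀ u, RedStar R t u → ¬ IsKindLike u

theorem NeverKindLike.rename {ρ : ℕ → ℕ} (hρ : Function.Injective ρ) {t : Trm F}
    (ht : NeverKindLike R t) : NeverKindLike R (t.rename ρ) := by
  intro u hu hk
  obtain ⟨τ, hτ⟩ := hρ.hasLeftInverse
  have htu : RedStar R t (u.rename τ) := Trm.rename_leftInverse hτ t ▸ hu.rename τ
  exact ht _ htu (Trm.isKindLike_rename.2 hk)

theorem forall_mem_piDoms_rename_neverKindLike {ρ : ℕ → ℕ} (hρ : Function.Injective ρ)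
    {t : Trm F} (ht : ∀ A ∈ t.piDoms, NeverKindLike R A) :
    ∀ A ∈ (t.rename ρ).piDoms, NeverKindLike R A := by
  induction t generalizing ρ with
  | pi A B _ ihB =>
    simp only [Trm.rename, Trm.piDoms, List.forall_mem_cons] at ht ⊢
    exact ⟨ht.1.rename hρ, ihB (Trm.upRen_injective hρ) ht.2⟩
  | _ => exact List.forall_mem_nil _

end Reduction

/-! # Typing and kinds -/

namespace Typing

variable {F : Type} {R : Rules F} {Θ sΘ : F → Trm F} {Γ : List (Trm F)} {t u T : Trm F}

theorem kindFree (h : Typing R Θ sΘ Γ t T) : t.KindFree ∧ (T = .kind ∨ T.KindFree) := by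
  induction h with
  | ax => exact ⟨trivial, .inl rfl⟩
  | var _ _ ih => exact ⟨trivial, .inr (ih.1.rename _)⟩
  | weak _ _ _ _ ih =>
    exact ⟨ih.1.rename _, ih.2.imp Trm.rename_eq_kind.2 (·.rename _)⟩
  | prod _ _ _ ihA ihB => exact ⟨⟨ihA.1, ihB.1⟩, ihB.2⟩
  | abs _ _ _ ihb ihP => exact ⟨⟨ihP.1.1, ihb.1⟩, .inr ihP.1⟩
  | app _ _ iht iha =>
    rcases iht.2 with hP | hP
    · cases hP
    · exact ⟨⟨iht.1, iha.1⟩, .inr (hP.2.subst1 iha.1)⟩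
  | conv _ _ _ _ iha ihB => exact ⟨iha.1, .inr ihB.1⟩
  | symb _ _ _ ih => exact ⟨trivial, .inr ih.1⟩

theorem ne_kind (h : Typing R Θ sΘ Γ t T) : t ≠ .kind := by
  rintro rfl
  exact h.kindFree.1

theorem redStar (hpres : PresTyping R Θ sΘ) (h : Typing R Θ sΘ Γ t T) (hu : RedStar R t u) :
    Typing R Θ sΘ Γ u T := by
  induction hu with
  | refl => exact h
  | tail _ hs ih => exact hpres _ _ _ _ ih hs

theorem isKind (h : Typing R Θ sΘ Γ t .kind) : t.IsKind := by
  generalize hT : Trm.kind = T at h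
  induction h with
  | ax => trivial
  | var _ hA _ => exact absurd (Trm.rename_eq_kind.1 hT.symm) hA.ne_kind
  | weak _ _ _ _ ih => exact Trm.isKind_rename.2 (ih (Trm.rename_eq_kind.1 hT.symm).symm)
  | prod _ _ _ _ ihB => exact ihB hT
  | abs => cases hT
  | app ht ha _ _ =>
    rcases ht.kindFree.2 with hP | hP
    · cases hP
    · exact (hT ▸ hP.2.subst1 ha.kindFree.1 : Trm.kind.KindFree).elim
  | conv _ _ hB _ _ _ => exact absurd hT.symm hB.ne_kind
  | symb _ _ hf _ => exact absurd hT.symm hf.ne_kind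

theorem eq_kind_of_isKind (hR : SymHeaded R) (hpres : PresTyping R Θ sΘ)
    (h : Typing R Θ sΘ Γ t T) (ht : t.IsKind) : T = .kind := by
  induction h with
  | ax => rfl
  | weak _ _ _ _ ih => exact Trm.rename_eq_kind.2 (ih (Trm.isKind_rename.1 ht))
  | prod _ _ _ _ ihB => exact ihB ht
  | conv _ hj hB _ iha _ =>
    -- `KIND` is normal, so a type joinable with it reduces to it and would make it typable.
    obtain ⟨v, hv, hBv⟩ := hj
    rw [iha ht] at hv
    have hvk : v = .kind := (Trm.IsSort.normalForm hR (.inr rfl)).eq_of_redStar hv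
    exact absurd hvk (hB.redStar hpres hBv).ne_kind
  | _ => exact ht.elim

theorem neverKindLike (hR : SymHeaded R) (hpres : PresTyping R Θ sΘ)
    (h : Typing R Θ sΘ Γ t T) (hT : T ≠ .kind) : NeverKindLike R t := by
  rintro u hu (hk | hk)
  · exact hT ((h.redStar hpres hu).eq_kind_of_isKind hR hpres hk)
  · exact (h.redStar hpres hu).ne_kind hk

theorem neverKindLike_of_mem_piDoms (hR : SymHeaded R) (hpres : PresTyping R Θ sΘ)
    (h : Typing R Θ sΘ Γ t T) : ∀ A ∈ t.piDoms, NeverKindLike R A := by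
  induction h with
  | weak _ _ _ _ ih => exact forall_mem_piDoms_rename_neverKindLike Nat.succ_injective ih
  | prod _ hA _ _ ihB =>
    exact List.forall_mem_cons.2 ⟨hA.neverKindLike hR hpres nofun, ihB⟩
  | conv _ _ _ _ iha _ => exact iha
  | _ => exact List.forall_mem_nil _

end Typing

/-! # Interpretation of types -/

section Interpretation

variable {F : Type} {R : Rules F} {I : Interp F} {T T' A B : Trm F} {σ : ℕ → Trm F}

theorem Red.mem_domD (h : Red R T T') (hT : T ∈ domD R I) : T' ∈ domD R I :=
  ⟨hT.1.inv h, fun A B hAB => hT.2 A B (.head h hAB)⟩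

theorem interpF_of_redStar_pi (hconf : LocallyConfluent R) (hT : T ∈ domD R I)
    (hTP : RedStar R T (.pi A B)) (hP : NormalForm R (.pi A B)) :
    interpF R I T = Part.some (piPart I A B) := by
  have h : ∃ A B, RedStar R T (.pi A B) ∧ NormalForm R (.pi A B) := ⟨A, B, hTP, hP⟩
  obtain ⟨hTQ, hQ⟩ := h.choose_spec.choose_spec
  obtain ⟨hA, hB⟩ := Trm.pi.inj (hT.1.normalForm_unique hconf hQ hP hTQ hTP)
  exact Part.eq_some_iff.2 ⟨hT, (dif_pos h).trans (congrArg₂ (piPart I) hA hB)⟩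

theorem interpF_of_not_redStar_pi (hT : T ∈ domD R I)
    (h : ¬ ∃ A B, RedStar R T (.pi A B) ∧ NormalForm R (.pi A B)) :
    interpF R I T = Part.some (SNset R) :=
  Part.eq_some_iff.2 ⟨hT, dif_neg h⟩

theorem interpF_eq_of_red (hconf : LocallyConfluent R) (hT : T ∈ domD R I) (h : Red R T T') :
    interpF R I T = interpF R I T' := by
  have hT' := h.mem_domD hT
  by_cases hpi : ∃ A B, RedStar R T' (.pi A B) ∧ NormalForm R (.pi A B)
  · obtain ⟨A, B, hT'P, hP⟩ := hpi
    rw [interpF_of_redStar_pi hconf hT (.head h hT'P) hP, interpF_of_redStar_pi hconf hT' hT'P hP]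
  · rw [interpF_of_not_redStar_pi hT' hpi, interpF_of_not_redStar_pi hT]
    rintro ⟨A, B, hTP, hP⟩
    exact hpi ⟨A, B, hT.1.redStar_normalForm hconf hP hTP (.single h), hP⟩

theorem dom_iff_mem_domD (hfix : Function.IsFixedPt (interpF R) I) :
    (I T).Dom ↔ T ∈ domD R I :=
  iff_of_eq (congrArg (fun J : Interp F => (J T).Dom) hfix.eq.symm)

theorem mem_domD_of_subst_pi_mem_domD (hfix : Function.IsFixedPt (interpF R) I)
    (h : (Trm.pi A B).subst σ ∈ domD R I) :
    A.subst σ ∈ domD R I ∧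
      ∀ a ∈ partMem I (A.subst σ), B.subst (Trm.scons a σ) ∈ domD R I := by
  obtain ⟨hA, hB⟩ := h.2 _ _ .refl
  refine ⟨(dom_iff_mem_domD hfix).1 hA, fun a ha => ?_⟩
  rw [← Trm.subst1_subst_up, ← dom_iff_mem_domD hfix]
  exact hB _ (Part.get_mem hA) a (ha _ (Part.get_mem hA))

theorem interp_pi_of_isKind (hB : B.IsKind) :
    interp R I (.pi A B) σ =
      {t | ∀ a ∈ interp R I A σ, Trm.app t a ∈ interp R I B (Trm.scons a σ)} := by
  rw [interp, if_pos hB]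

theorem interp_of_not_isKindLike (hT : ¬ IsKindLike T) (h : T.subst σ ∈ domD R I) :
    interp R I T σ = partMem I (T.subst σ) := by
  cases T with
  | type => exact absurd (.inl trivial) hT
  | kind => exact absurd (.inr rfl) hT
  | pi A B =>
    have hB : ¬ B.IsKind := fun hB => hT (.inl hB)
    rw [interp, if_neg hB, if_pos h]
  | _ => rw [interp, if_pos h]

theorem NeverKindLike.interp_eq_of_red (hconf : LocallyConfluent R)
    (hfix : Function.IsFixedPt (interpF R) I) (hT : NeverKindLike R T)
    (hdom : T.subst σ ∈ domD R I) (h : Red R T T') : interp R I T σ = interp R I T' σ := by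
  have hσ : Red R (T.subst σ) (T'.subst σ) := h.subst σ
  have hI : I (T.subst σ) = I (T'.subst σ) := by
    rw [← hfix.eq]
    exact interpF_eq_of_red hconf (hfix.eq.symm ▸ hdom) hσ
  rw [interp_of_not_isKindLike (hT T .refl) hdom,
    interp_of_not_isKindLike (hT T' (.single h)) (hσ.mem_domD hdom), partMem, partMem, hI]

theorem Trm.IsKind.interp_eq_of_red (hR : SymHeaded R) (hconf : LocallyConfluent R)
    (hfix : Function.IsFixedPt (interpF R) I) (hT : T.IsKind)
    (hdoms : ∀ A ∈ T.piDoms, NeverKindLike R A) (hdom : T.subst σ ∈ domD R I)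
    (h : Red R T T') : interp R I T σ = interp R I T' σ := by
  induction T generalizing T' σ with
  | type => exact absurd h (Trm.IsSort.normalForm hR (.inl rfl) _)
  | pi A B _ ihB =>
    have hB : B.IsKind := hT
    obtain ⟨hA, hdomsB⟩ := List.forall_mem_cons.1 hdoms
    obtain ⟨hAdom, hBdom⟩ := mem_domD_of_subst_pi_mem_domD hfix hdom
    rcases (red_pi_iff hR).1 h with ⟨A', hAA', rfl⟩ | ⟨B', hBB', rfl⟩
    · rw [interp_pi_of_isKind hB, interp_pi_of_isKind hB,
        hA.interp_eq_of_red hconf hfix hAdom hAA']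
    · rw [interp_pi_of_isKind hB, interp_pi_of_isKind (hB.red hR hBB')]
      ext t
      refine forall₂_congr fun a ha => ?_
      rw [interp_of_not_isKindLike (hA A .refl) hAdom] at ha
      rw [ihB hB hdomsB (hBdom a ha) hBB']
  | _ => exact hT.elim

end Interpretation

theorem interp_invariant_red_general {F : Type} {R : Rules F} {Θ sΘ : F → Trm F}
    (hR : SymHeaded R) (hconf : LocallyConfluent R) (hpres : PresTyping R Θ sΘ)
    {I : Interp F} (hfix : Function.IsFixedPt (interpF R) I)
    {Γ : List (Trm F)} {T T' U : Trm F} {σ : ℕ → Trm F} (hT : Typing R Θ sΘ Γ T U)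
    (hdom : T.subst σ ∈ domD R I) (hred : Red R T T') :
    interp R I T σ = interp R I T' σ := by
  by_cases hk : T.IsKind
  · exact hk.interp_eq_of_red hR hconf hfix (hT.neverKindLike_of_mem_piDoms hR hpres) hdom hred
  · have hU : U ≠ .kind := by
      rintro rfl
      exact hk hT.isKind
    exact (hT.neverKindLike hR hpres hU).interp_eq_of_red hconf hfix hdom hred

/-- Lemma 4(b) of the paper. If `T` is typable, `Tσ ∈ 𝒟` and `T → T'`,
then `⟦T⟧σ = ⟦T'⟧σ`. -/
theorem interp_invariant_red {F : Type} (R : Rules F) (Θ sΘ : F → Trm F)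
    (hRS : IsRewriteSystem R)
    (hconf : LocallyConfluent R)
    (hpres : PresTyping R Θ sΘ)
    (calI : Interp F) (hlfp : IsLfpInterp (interpF R) calI)
    (T T' : Trm F) (σ : ℕ → Trm F)
    (htyp : ∃ (Γ : List (Trm F)) (U : Trm F), Typing R Θ sΘ Γ T U)
    (hdom : Trm.subst σ T ∈ domD R calI)
    (hred : Red R T T') :
    interp R calI T σ = interp R calI T' σ := by
  obtain ⟨Γ, U, hT⟩ := htyp
  exact interp_invariant_red_general hRS.symHeaded hconf hpres hlfp.1 hT hdom hred
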